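/- arXiv:2302.12384 — 4 statements merged into one kernel-verified Lean document; each statement's English description precedes it below -/
import Mathlib

section
/- For every integer m ≥ 0, the Jackiw–Pi vortex Q satisfies ‖Q‖_{L²}² = 2π·∫₀^∞ Q(r)²·r dr = 8π(m+1). -/
open MeasureTheory Set Filter

noncomputable section

/-- The Jackiw–Pi vortex `Q(r) = √8 (m+1) r^m / (1 + r^(2m+2))`. -/
def Q (m : ℕ) (r : ℝ) : ℝ :=
  Real.sqrt 8 * (m + 1) * r ^ m / (1 + r ^ (2 * m + 2))

/-- `A_θ[u](r) = -(1/2) ∫₀^r |u(r')|² r' dr'`. -/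
def Atheta (u : ℝ → ℂ) (r : ℝ) : ℝ :=
  -(1 / 2) * ∫ s in (0:ℝ)..r, ‖u s‖ ^ 2 * s

/-- Bilinear version `A_θ[f,g](r) = -(1/2) ∫₀^r Re(conj f g) r' dr'`. -/
def Atheta2 (f g : ℝ → ℂ) (r : ℝ) : ℝ :=
  -(1 / 2) * ∫ s in (0:ℝ)..r, ((starRingEnd ℂ) (f s) * g s).re * s

/-- `A_t[u](r) = -∫_r^∞ (m + A_θ[u](r')) |u(r')|² / r' dr'`. -/
def At (m : ℕ) (u : ℝ → ℂ) (r : ℝ) : ℝ :=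
  -∫ s in Set.Ioi r, ((m : ℝ) + Atheta u s) * ‖u s‖ ^ 2 / s

/-- Squared (2D radial) `L²` norm: `‖u‖² = 2π ∫₀^∞ |u(r)|² r dr`. -/
def L2sq (u : ℝ → ℂ) : ℝ :=
  2 * Real.pi * ∫ r in Set.Ioi (0:ℝ), ‖u r‖ ^ 2 * r

/-- Squared equivariant `Ḣ¹_m` norm. -/
def H1msq (m : ℕ) (u : ℝ → ℂ) : ℝ :=
  2 * Real.pi * ∫ r in Set.Ioi (0:ℝ), (‖deriv u r‖ ^ 2 + (m : ℝ) ^ 2 * ‖u r‖ ^ 2 / r ^ 2) * r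

/-- The energy functional. -/
def Energy (m : ℕ) (u : ℝ → ℂ) : ℝ :=
  2 * Real.pi * ∫ r in Set.Ioi (0:ℝ),
    ((1 / 2) * ‖deriv u r‖ ^ 2
      + (1 / 2) * (((m : ℝ) + Atheta u r) / r) ^ 2 * ‖u r‖ ^ 2
      - (1 / 4) * ‖u r‖ ^ 4) * r

/-- The Chern–Simons–Schrödinger equation at the point `(t, r)`:
`i ∂_t u - A_t[u] u + ∂_r² u + (1/r) ∂_r u - ((m + A_θ[u])/r)² u + |u|² u = 0`. -/
def CSSeq (m : ℕ) (u : ℝ → ℝ → ℂ) (t r : ℝ) : Prop :=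
  Complex.I * deriv (fun s => u s r) t
    - (At m (u t) r : ℂ) * u t r
    + deriv (deriv (u t)) r
    + (1 / (r : ℂ)) * deriv (u t) r
    - ((((m : ℝ) + Atheta (u t) r) / r : ℝ) : ℂ) ^ 2 * u t r
    + ((‖u t r‖ : ℝ) : ℂ) ^ 2 * u t r = 0

/-- A classical `m`-equivariant solution of CSS on the open interval `I`. -/
structure IsCSS (m : ℕ) (I : Set ℝ) (u : ℝ → ℝ → ℂ) : Prop where
  smooth : ContDiffOn ℝ (⊤ : ℕ∞) (fun p : ℝ × ℝ => u p.1 p.2) (I ×ˢ Set.Ioi (0:ℝ))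
  integrable : ∀ t ∈ I, IntegrableOn (fun r => ‖u t r‖ ^ 2 * r) (Set.Ioi (0:ℝ))
  equivariant : ∃ U : ℝ → ℝ × ℝ → ℂ,
    ContDiffOn ℝ (⊤ : ℕ∞) (fun p : ℝ × (ℝ × ℝ) => U p.1 p.2) (I ×ˢ (Set.univ : Set (ℝ × ℝ))) ∧
    ∀ t ∈ I, ∀ x : ℝ × ℝ, x ≠ 0 →
      U t x = u t (Real.sqrt (x.1 ^ 2 + x.2 ^ 2)) *
        (((x.1 : ℂ) + (x.2 : ℂ) * Complex.I) / ((Real.sqrt (x.1 ^ 2 + x.2 ^ 2) : ℝ) : ℂ)) ^ m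
  bounded : ∀ J : Set ℝ, J ⊆ I → IsCompact J → ∃ C : ℝ, ∀ t ∈ J,
    Real.sqrt (L2sq (u t)) + Real.sqrt (H1msq m (u t)) ≤ C
  eq : ∀ t ∈ I, ∀ r : ℝ, 0 < r → CSSeq m u t r

/-- Tightness: uniformly small mass near spatial infinity. -/
def Tight (I : Set ℝ) (u : ℝ → ℝ → ℂ) : Prop :=
  ∀ η : ℝ, 0 < η → ∃ R : ℝ, ∀ t ∈ I,
    2 * Real.pi * ∫ r in Set.Ioi R, ‖u t r‖ ^ 2 * r < η

/-- The real inner product `(f,g)_r = Re (2π ∫₀^∞ f conj(g) r dr)`. -/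
def iprod (f g : ℝ → ℂ) : ℝ :=
  2 * Real.pi * (∫ r in Set.Ioi (0:ℝ), f r * (starRingEnd ℂ) (g r) * (r : ℂ)).re

/-- `ΛQ = r Q' + Q`. -/
def LamQ (m : ℕ) (r : ℝ) : ℝ := r * deriv (Q m) r + Q m r

/-- The linearized Bogomol'nyi operator `L_Q`. -/
def LQ (m : ℕ) (f : ℝ → ℂ) (r : ℝ) : ℂ :=
  deriv f r - ((((m : ℝ) + Atheta (fun s => (Q m s : ℂ)) r) / r : ℝ) : ℂ) * f r
    - ((2 * Atheta2 (fun s => (Q m s : ℂ)) f r / r : ℝ) : ℂ) * (Q m r : ℂ)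

end

/-!
Since `Q(r)² r = 4(m+1) · f'(r) / f(r)²` with `f(r) = 1 + r^(2m+2)`, the mass density of the vortex
is the derivative of `-4(m+1) / f`, which vanishes at infinity.
-/

theorem integral_Ioi_deriv_div_sq_of_tendsto_atTop {f f' : ℝ → ℝ} {a : ℝ}
    (hderiv : ∀ x ∈ Ici a, HasDerivAt f (f' x) x) (hne : ∀ x ∈ Ici a, f x ≠ 0)
    (hnonneg : ∀ x ∈ Ioi a, 0 ≤ f' x) (hlim : Tendsto f atTop atTop) :
    ∫ x in Ioi a, f' x / f x ^ 2 = (f a)⁻¹ := by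
  have hderiv_inv : ∀ x ∈ Ici a, HasDerivAt (fun y ↦ -(f y)⁻¹) (f' x / f x ^ 2) x := fun x hx ↦
    ((hderiv x hx).fun_inv (hne x hx)).fun_neg.congr_deriv (by ring)
  have hlim_inv : Tendsto (fun y ↦ -(f y)⁻¹) atTop (nhds 0) := by
    simpa using hlim.inv_tendsto_atTop.neg
  have hnonneg_div : ∀ x ∈ Ioi a, 0 ≤ f' x / f x ^ 2 := fun x hx ↦
    div_nonneg (hnonneg x hx) (sq_nonneg _)
  simpa using integral_Ioi_of_hasDerivAt_of_nonneg' hderiv_inv hnonneg_div hlim_inv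

theorem integral_Ioi_pow_div_add_pow_sq (n : ℕ) {a c : ℝ} (ha : 0 ≤ a) (hc : 0 < c) :
    ∫ x in Ioi a, (n + 1) * x ^ n / (c + x ^ (n + 1)) ^ 2 = (c + a ^ (n + 1))⁻¹ := by
  refine integral_Ioi_deriv_div_sq_of_tendsto_atTop (f := fun x ↦ c + x ^ (n + 1))
    (fun x _ ↦ ?_) (fun x hx ↦ ?_) (fun x hx ↦ ?_) ?_
  · simpa using (hasDerivAt_pow (n + 1) x).const_add c
  · have hx_nonneg : 0 ≤ x := ha.trans hx
    positivity
  · have hx_pos : 0 < x := ha.trans_lt hx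
    positivity
  · exact tendsto_atTop_add_const_left _ _ (tendsto_pow_atTop n.succ_ne_zero)

theorem Q_sq_mul_self (m : ℕ) (r : ℝ) :
    Q m r ^ 2 * r =
      4 * (m + 1) * (((2 * m + 1 : ℕ) + 1) * r ^ (2 * m + 1) / (1 + r ^ (2 * m + 2)) ^ 2) := by
  have hsqrt : √(8 : ℝ) ^ 2 = 8 := Real.sq_sqrt (by norm_num)
  rw [Q, div_pow, mul_pow, mul_pow, hsqrt]
  push_cast
  ring

theorem integral_Ioi_Q_sq_mul_self (m : ℕ) {a : ℝ} (ha : 0 ≤ a) :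
    ∫ r in Ioi a, Q m r ^ 2 * r = 4 * (m + 1) / (1 + a ^ (2 * m + 2)) := by
  simp only [Q_sq_mul_self]
  rw [integral_const_mul, integral_Ioi_pow_div_add_pow_sq (2 * m + 1) ha one_pos, div_eq_mul_inv]

/-- `‖Q‖_{L²}² = 2π ∫₀^∞ Q(r)² r dr = 8π(m+1)` for every integer `m ≥ 0`. -/
theorem stmt0 (m : ℕ) :
    2 * Real.pi * ∫ r in Set.Ioi (0:ℝ), Q m r ^ 2 * r = 8 * Real.pi * (m + 1) := by
  have hmass : ∫ r in Ioi (0 : ℝ), Q m r ^ 2 * r = 4 * (m + 1) := by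
    simpa using integral_Ioi_Q_sq_mul_self m le_rfl
  rw [hmass]
  ring
end

section
/- For every integer m ≥ 0 and every r > 0: A_θ[Q](r) = −2(m+1)·r^(2m+2)/(1 + r^(2m+2)), and Q solves the Bogomol'nyi equation D_Q Q = 0, i.e. Q'(r) − ((m + A_θ[Q](r))/r)·Q(r) = 0. -/
open MeasureTheory Set Filter

/-!
With `w = r ^ (2m+2)` we have `Q² r = 4 (m+1) w' / (1 + w)²`, the derivative of
`4 (m+1) w / (1 + w)`. This primitive vanishes at `0`, which gives the closed form of `A_θ[Q]`.
The Bogomol'nyi equation says that the logarithmic derivative of `Q` is `(m + A_θ[Q]) / r`, and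
that of `r ^ m / (1 + w)` is `m / r - w' / (1 + w)`, where `w' = (2m+2) w / r`.
-/

theorem hasDerivAt_div_one_add {𝕜 : Type*} [NontriviallyNormedField 𝕜] {f : 𝕜 → 𝕜} {f' x : 𝕜}
    (hf : HasDerivAt f f' x) (hx : 1 + f x ≠ 0) :
    HasDerivAt (fun y => f y / (1 + f y)) (f' / (1 + f x) ^ 2) x :=
  (hf.fun_div (hf.const_add 1) hx).congr_deriv (by ring)

theorem one_add_pow_two_mul_add_two_pos {R : Type*} [Ring R] [LinearOrder R]
    [IsStrictOrderedRing R] (m : ℕ) (r : R) : 0 < 1 + r ^ (2 * m + 2) :=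
  add_pos_of_pos_of_nonneg one_pos (Even.pow_nonneg ⟨m + 1, by ring⟩ r)

theorem Atheta_ofReal (u : ℝ → ℝ) (r : ℝ) :
    Atheta (fun s => (u s : ℂ)) r = -(1 / 2) * ∫ s in (0 : ℝ)..r, u s ^ 2 * s := by
  simp only [Atheta, Complex.norm_real, Real.norm_eq_abs, sq_abs]

theorem continuous_Q (m : ℕ) : Continuous (Q m) :=
  Continuous.div (by fun_prop) (by fun_prop) fun r => (one_add_pow_two_mul_add_two_pos m r).ne'

theorem Q_ne_zero (m : ℕ) {r : ℝ} (hr : r ≠ 0) : Q m r ≠ 0 := by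
  have hden := (one_add_pow_two_mul_add_two_pos m r).ne'
  unfold Q
  positivity

theorem Q_sq (m : ℕ) (r : ℝ) :
    Q m r ^ 2 = 8 * (m + 1) ^ 2 * r ^ (2 * m) / (1 + r ^ (2 * m + 2)) ^ 2 := by
  rw [Q, div_pow, mul_pow, mul_pow, Real.sq_sqrt (by norm_num), ← pow_mul, mul_comm m 2]

theorem hasDerivAt_primitive_Q_sq_mul (m : ℕ) (r : ℝ) :
    HasDerivAt (fun s : ℝ => 4 * (m + 1) * (s ^ (2 * m + 2) / (1 + s ^ (2 * m + 2))))
      (Q m r ^ 2 * r) r := by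
  have hprim := (hasDerivAt_div_one_add (hasDerivAt_pow (2 * m + 2) r)
    (one_add_pow_two_mul_add_two_pos m r).ne').const_mul (4 * (m + 1 : ℝ))
  refine hprim.congr_deriv ?_
  rw [Q_sq, show 2 * m + 2 - 1 = 2 * m + 1 from rfl]
  push_cast
  ring

theorem integral_Q_sq_mul (m : ℕ) (r : ℝ) :
    ∫ s in (0 : ℝ)..r, Q m s ^ 2 * s =
      4 * (m + 1) * (r ^ (2 * m + 2) / (1 + r ^ (2 * m + 2))) := by
  have hcont : Continuous fun s => Q m s ^ 2 * s := ((continuous_Q m).pow 2).mul continuous_id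
  rw [intervalIntegral.integral_eq_sub_of_hasDerivAt
    (fun s _ => hasDerivAt_primitive_Q_sq_mul m s) (hcont.intervalIntegrable 0 r)]
  simp

theorem Atheta_Q (m : ℕ) (r : ℝ) :
    Atheta (fun s => (Q m s : ℂ)) r =
      -2 * (m + 1) * r ^ (2 * m + 2) / (1 + r ^ (2 * m + 2)) := by
  rw [Atheta_ofReal, integral_Q_sq_mul]
  ring

theorem logDeriv_Q (m : ℕ) {r : ℝ} (hr : r ≠ 0) :
    logDeriv (Q m) r = m / r - (2 * m + 2) * r ^ (2 * m + 1) / (1 + r ^ (2 * m + 2)) := by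
  have hconst : Real.sqrt 8 * (m + 1) ≠ 0 := by positivity
  have hnum : Real.sqrt 8 * (m + 1) * r ^ m ≠ 0 := mul_ne_zero hconst (pow_ne_zero m hr)
  have hden := (one_add_pow_two_mul_add_two_pos m r).ne'
  have logDeriv_num : logDeriv (fun s : ℝ => Real.sqrt 8 * (m + 1) * s ^ m) r = m / r := by
    rw [logDeriv_const_mul r _ hconst, logDeriv_pow]
  have logDeriv_den : logDeriv (fun s : ℝ => 1 + s ^ (2 * m + 2)) r =
      (2 * m + 2) * r ^ (2 * m + 1) / (1 + r ^ (2 * m + 2)) := by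
    simp [logDeriv_apply]
  rw [← logDeriv_num, ← logDeriv_den]
  exact logDeriv_div r hnum hden (by fun_prop) (by fun_prop)

theorem logDeriv_Q_eq_add_Atheta_div (m : ℕ) {r : ℝ} (hr : r ≠ 0) :
    logDeriv (Q m) r = (m + Atheta (fun s => (Q m s : ℂ)) r) / r := by
  have hden := (one_add_pow_two_mul_add_two_pos m r).ne'
  rw [logDeriv_Q m hr, Atheta_Q]
  field_simp
  ring

theorem deriv_Q (m : ℕ) {r : ℝ} (hr : r ≠ 0) :
    deriv (Q m) r = (m + Atheta (fun s => (Q m s : ℂ)) r) / r * Q m r := by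
  rw [← logDeriv_Q_eq_add_Atheta_div m hr, logDeriv_apply, div_mul_cancel₀ _ (Q_ne_zero m hr)]

/-- `A_θ[Q](r) = -2(m+1) r^(2m+2)/(1+r^(2m+2))` and `Q` solves the
Bogomol'nyi equation `D_Q Q = 0`. -/
theorem stmt2 (m : ℕ) (r : ℝ) (hr : 0 < r) :
    Atheta (fun s => (Q m s : ℂ)) r = -2 * (m + 1) * r ^ (2 * m + 2) / (1 + r ^ (2 * m + 2)) ∧
    deriv (Q m) r - (((m : ℝ) + Atheta (fun s => (Q m s : ℂ)) r) / r) * Q m r = 0 :=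
  ⟨Atheta_Q m r, sub_eq_zero.mpr (deriv_Q m hr.ne')⟩
end

section
/- Let m ≥ 1 be an integer and let f : (0,∞) → ℂ be continuously differentiable with f(r) → 0 as r → 0⁺, (m + A_θ[f](r))·|f(r)|² → 0 as r → ∞, and 2π·∫₀^∞ (|f'(r)|² + |f(r)|²/r² + |f(r)|⁴)·r dr < ∞. Then the energy has the self-dual form E[f] = (1/2)·2π·∫₀^∞ |f'(r) − ((m + A_θ[f](r))/r)·f(r)|²·r dr; in particular E[f] ≥ 0. -/
open MeasureTheory Set Filter

/-!
Write `a = m + A_θ[f]`, so that `a' = -(1/2) |f|² r`. Expanding the square,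
`|f' - (a/r) f|² r = |f'|² r + (a/r)² |f|² r - a (|f|²)'`, and
`a (|f|²)' = (a |f|²)' + (1/2) |f|⁴ r`. Hence twice the energy density is the self-dual density
plus the total derivative `(a |f|²)'`, which integrates to zero because `a |f|²` vanishes at both
ends.
-/

open scoped Topology RealInnerProductSpace

section WeightedSquares

variable {α F : Type*} [MeasurableSpace α] {μ : Measure α} [NormedAddCommGroup F]
  {u v : α → F} {w : α → ℝ}

theorem integrable_norm_sub_sq_mul (hu : AEStronglyMeasurable u μ) (hv : AEStronglyMeasurable v μ)
    (hw : AEStronglyMeasurable w μ) (hw_nonneg : ∀ᵐ x ∂μ, 0 ≤ w x)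
    (hu_int : Integrable (fun x ↦ ‖u x‖ ^ 2 * w x) μ)
    (hv_int : Integrable (fun x ↦ ‖v x‖ ^ 2 * w x) μ) :
    Integrable (fun x ↦ ‖u x - v x‖ ^ 2 * w x) μ := by
  refine ((hu_int.add hv_int).const_mul 2).mono' (((hu.sub hv).norm.pow 2).mul hw) ?_
  filter_upwards [hw_nonneg] with x hx
  rw [Real.norm_of_nonneg (by positivity)]
  calc ‖u x - v x‖ ^ 2 * w x
      ≤ (‖u x‖ + ‖v x‖) ^ 2 * w x := by gcongr; exact norm_sub_le _ _
    _ ≤ 2 * (‖u x‖ ^ 2 + ‖v x‖ ^ 2) * w x := by gcongr; exact add_sq_le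
    _ = 2 * (‖u x‖ ^ 2 * w x + ‖v x‖ ^ 2 * w x) := by ring

theorem integrable_norm_sub_sq_mul_iff (hu : AEStronglyMeasurable u μ)
    (hv : AEStronglyMeasurable v μ) (hw : AEStronglyMeasurable w μ)
    (hw_nonneg : ∀ᵐ x ∂μ, 0 ≤ w x) (hu_int : Integrable (fun x ↦ ‖u x‖ ^ 2 * w x) μ) :
    Integrable (fun x ↦ ‖u x - v x‖ ^ 2 * w x) μ ↔ Integrable (fun x ↦ ‖v x‖ ^ 2 * w x) μ := by
  refine ⟨fun hsub ↦ ?_, integrable_norm_sub_sq_mul hu hv hw hw_nonneg hu_int⟩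
  simpa only [Pi.sub_apply, sub_sub_cancel] using
    integrable_norm_sub_sq_mul hu (hu.sub hv) hw hw_nonneg hu_int hsub

end WeightedSquares

section Densities

variable {F : Type*} [NormedAddCommGroup F] [InnerProductSpace ℝ F] {a : ℝ → ℝ} {f : ℝ → F}

/-- The radial energy density of a field `f` in the angular potential `a`, including the weight `r`
of the planar area element. With `a = m + A_θ[f]` it is the integrand of `Energy m f`. -/
noncomputable def energyDensity (a : ℝ → ℝ) (f : ℝ → F) (r : ℝ) : ℝ :=
  ((1 / 2) * ‖deriv f r‖ ^ 2 + (1 / 2) * (a r / r) ^ 2 * ‖f r‖ ^ 2 - (1 / 4) * ‖f r‖ ^ 4) * r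

/-- The density `|f' - (a/r) f|² r` of the self-dual (Bogomol'nyi) form of the energy of a field `f`
in the angular potential `a`. -/
noncomputable def selfDualDensity (a : ℝ → ℝ) (f : ℝ → F) (r : ℝ) : ℝ :=
  ‖deriv f r - (a r / r) • f r‖ ^ 2 * r

theorem selfDualDensity_nonneg {r : ℝ} (hr : 0 ≤ r) : 0 ≤ selfDualDensity a f r :=
  mul_nonneg (sq_nonneg _) hr

/- The bracket is the derivative of `a |f|²` when `a' = -(1/2) |f|² r`. -/
theorem energyDensity_eq_half_selfDualDensity_add {r : ℝ} (hr : r ≠ 0) :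
    energyDensity a f r = (1 / 2) * selfDualDensity a f r +
      (1 / 2) * (-(1 / 2) * (‖f r‖ ^ 2 * r) * ‖f r‖ ^ 2 + a r * (2 * ⟪f r, deriv f r⟫)) := by
  have expand_sq : ‖deriv f r - (a r / r) • f r‖ ^ 2 =
      ‖deriv f r‖ ^ 2 - 2 * (a r / r * ⟪f r, deriv f r⟫) + (a r / r) ^ 2 * ‖f r‖ ^ 2 := by
    rw [norm_sub_sq_real, real_inner_smul_right, real_inner_comm, norm_smul, mul_pow,
      Real.norm_eq_abs, sq_abs]
  rw [energyDensity, selfDualDensity, expand_sq]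
  field_simp
  ring

theorem integrableOn_energyDensity_iff_norm_smul_sq
    (hderiv : IntegrableOn (fun r ↦ ‖deriv f r‖ ^ 2 * r) (Ioi 0))
    (hquartic : IntegrableOn (fun r ↦ ‖f r‖ ^ 4 * r) (Ioi 0)) :
    IntegrableOn (energyDensity a f) (Ioi 0) ↔
      IntegrableOn (fun r ↦ ‖(a r / r) • f r‖ ^ 2 * r) (Ioi 0) := by
  have split : energyDensity a f = fun r ↦
      ((1 / 2) * (‖deriv f r‖ ^ 2 * r) - (1 / 4) * (‖f r‖ ^ 4 * r)) +
        (1 / 2) * (‖(a r / r) • f r‖ ^ 2 * r) := by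
    funext r
    rw [energyDensity, norm_smul, mul_pow, Real.norm_eq_abs, sq_abs]
    ring
  rw [split]
  exact (integrable_add_iff_integrable_right'
    ((hderiv.const_mul _).sub (hquartic.const_mul _))).trans
    (integrable_const_mul_iff (isUnit_iff_ne_zero.mpr (by norm_num)) _)

theorem integrableOn_energyDensity_iff_selfDualDensity (hf : ContDiffOn ℝ 1 f (Ioi 0))
    (ha : ContinuousOn a (Ioi 0))
    (hderiv : IntegrableOn (fun r ↦ ‖deriv f r‖ ^ 2 * r) (Ioi 0))
    (hquartic : IntegrableOn (fun r ↦ ‖f r‖ ^ 4 * r) (Ioi 0)) :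
    IntegrableOn (energyDensity a f) (Ioi 0) ↔ IntegrableOn (selfDualDensity a f) (Ioi 0) := by
  have deriv_cont : ContinuousOn (deriv f) (Ioi 0) :=
    hf.continuousOn_deriv_of_isOpen isOpen_Ioi le_rfl
  have potential_cont : ContinuousOn (fun r ↦ (a r / r) • f r) (Ioi 0) :=
    (ha.div continuousOn_id fun _ hr ↦ ne_of_gt hr).smul hf.continuousOn
  rw [integrableOn_energyDensity_iff_norm_smul_sq hderiv hquartic]
  exact (integrable_norm_sub_sq_mul_iff (deriv_cont.aestronglyMeasurable measurableSet_Ioi)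
    (potential_cont.aestronglyMeasurable measurableSet_Ioi) aestronglyMeasurable_id
    ((ae_restrict_mem measurableSet_Ioi).mono fun _ hr ↦ le_of_lt hr) hderiv).symm

theorem integral_energyDensity_of_integrableOn (hf : DifferentiableOn ℝ f (Ioi 0))
    (ha : ∀ r ∈ Ioi (0 : ℝ), HasDerivAt a (-(1 / 2) * (‖f r‖ ^ 2 * r)) r)
    (hzero : Tendsto (fun r ↦ a r * ‖f r‖ ^ 2) (𝓝[>] 0) (𝓝 0))
    (hinf : Tendsto (fun r ↦ a r * ‖f r‖ ^ 2) atTop (𝓝 0))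
    (henergy : IntegrableOn (energyDensity a f) (Ioi 0))
    (hselfDual : IntegrableOn (selfDualDensity a f) (Ioi 0)) :
    ∫ r in Ioi 0, energyDensity a f r = (1 / 2) * ∫ r in Ioi 0, selfDualDensity a f r := by
  have norm_sq_deriv (r : ℝ) (hr : r ∈ Ioi 0) :
      HasDerivAt (fun r ↦ ‖f r‖ ^ 2) (2 * ⟪f r, deriv f r⟫) r :=
    (hf.differentiableAt (Ioi_mem_nhds hr)).hasDerivAt.norm_sq
  have boundary_eq : EqOn (fun r ↦ 2 * energyDensity a f r - selfDualDensity a f r)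
      (fun r ↦ -(1 / 2) * (‖f r‖ ^ 2 * r) * ‖f r‖ ^ 2 + a r * (2 * ⟪f r, deriv f r⟫))
      (Ioi 0) := fun r hr ↦ by
    dsimp only
    rw [energyDensity_eq_half_selfDualDensity_add (ne_of_gt hr)]
    ring
  have boundary_integrable :=
    IntegrableOn.congr_fun ((henergy.const_mul 2).sub hselfDual) boundary_eq measurableSet_Ioi
  have boundary_integral := integral_Ioi_deriv_mul_eq_sub ha norm_sq_deriv
    boundary_integrable hzero hinf
  rw [← setIntegral_congr_fun measurableSet_Ioi boundary_eq,
    integral_sub (henergy.const_mul 2) hselfDual, integral_const_mul] at boundary_integral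
  linarith

/- The term `(a/r)² |f|² r` may fail to be integrable. Then both energies are `+∞`, and the Bochner
integrals on the two sides take the junk value `0`. -/
theorem integral_energyDensity (hf : ContDiffOn ℝ 1 f (Ioi 0))
    (ha : ∀ r ∈ Ioi (0 : ℝ), HasDerivAt a (-(1 / 2) * (‖f r‖ ^ 2 * r)) r)
    (hzero : Tendsto (fun r ↦ a r * ‖f r‖ ^ 2) (𝓝[>] 0) (𝓝 0))
    (hinf : Tendsto (fun r ↦ a r * ‖f r‖ ^ 2) atTop (𝓝 0))
    (hderiv : IntegrableOn (fun r ↦ ‖deriv f r‖ ^ 2 * r) (Ioi 0))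
    (hquartic : IntegrableOn (fun r ↦ ‖f r‖ ^ 4 * r) (Ioi 0)) :
    ∫ r in Ioi 0, energyDensity a f r = (1 / 2) * ∫ r in Ioi 0, selfDualDensity a f r := by
  have integrable_iff := integrableOn_energyDensity_iff_selfDualDensity hf
    (HasDerivAt.continuousOn ha) hderiv hquartic
  by_cases hselfDual : IntegrableOn (selfDualDensity a f) (Ioi 0)
  · exact integral_energyDensity_of_integrableOn (hf.differentiableOn one_ne_zero) ha hzero hinf
      (integrable_iff.mpr hselfDual) hselfDual
  · rw [integral_undef hselfDual, integral_undef (mt integrable_iff.mp hselfDual), mul_zero]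

end Densities

section AngularPotential

variable {F : Type*} [NormedAddCommGroup F] {f : ℝ → F}

/-- The angular potential `κ + A_θ[f]` generated by a field `f` with angular momentum `κ`. -/
noncomputable def angularPotential (κ : ℝ) (f : ℝ → F) (r : ℝ) : ℝ :=
  κ + -(1 / 2) * ∫ s in (0 : ℝ)..r, ‖f s‖ ^ 2 * s

theorem intervalIntegrable_norm_sq_mul (hf : ContinuousOn f (Ioi 0))
    (hquartic : IntegrableOn (fun r ↦ ‖f r‖ ^ 4 * r) (Ioi 0)) {r : ℝ} (hr : 0 ≤ r) :
    IntervalIntegrable (fun s ↦ ‖f s‖ ^ 2 * s) volume 0 r := by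
  rw [intervalIntegrable_iff_integrableOn_Ioc_of_le hr]
  have hsub : Ioc 0 r ⊆ Ioi 0 := Ioc_subset_Ioi_self
  have hid : IntegrableOn (fun s : ℝ ↦ s) (Ioc 0 r) :=
    continuous_id.integrableOn_Ioc
  refine ((hquartic.mono_set hsub).add hid).mono'
    ((((hf.mono hsub).norm.pow 2).mul continuousOn_id).aestronglyMeasurable measurableSet_Ioc) ?_
  filter_upwards [ae_restrict_mem measurableSet_Ioc] with s ⟨hs, _⟩
  rw [Real.norm_of_nonneg (by positivity)]
  calc ‖f s‖ ^ 2 * s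
      ≤ (‖f s‖ ^ 4 + 1) * s := by gcongr; nlinarith [sq_nonneg (‖f s‖ ^ 2 - 1)]
    _ = ‖f s‖ ^ 4 * s + s := by ring

theorem hasDerivAt_angularPotential (κ : ℝ) (hf : ContinuousOn f (Ioi 0))
    (hquartic : IntegrableOn (fun r ↦ ‖f r‖ ^ 4 * r) (Ioi 0)) {r : ℝ} (hr : 0 < r) :
    HasDerivAt (angularPotential κ f) (-(1 / 2) * (‖f r‖ ^ 2 * r)) r := by
  have mass_cont : ContinuousOn (fun s ↦ ‖f s‖ ^ 2 * s) (Ioi 0) :=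
    (hf.norm.pow 2).mul continuousOn_id
  exact ((intervalIntegral.integral_hasDerivAt_right
    (intervalIntegrable_norm_sq_mul hf hquartic hr.le)
    (mass_cont.stronglyMeasurableAtFilter isOpen_Ioi r hr)
    (mass_cont.continuousAt (Ioi_mem_nhds hr))).const_mul _).const_add κ

theorem tendsto_angularPotential_nhdsGT_zero (κ : ℝ) (hf : ContinuousOn f (Ioi 0))
    (hquartic : IntegrableOn (fun r ↦ ‖f r‖ ^ 4 * r) (Ioi 0)) :
    Tendsto (angularPotential κ f) (𝓝[>] 0) (𝓝 κ) := by
  have potential_cont : ContinuousOn (angularPotential κ f) (uIcc 0 1) :=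
    continuousOn_const.add (continuousOn_const.mul
      (intervalIntegral.continuousOn_primitive_interval'
        (intervalIntegrable_norm_sq_mul hf hquartic zero_le_one) left_mem_uIcc))
  have value_zero : angularPotential κ f 0 = κ := by simp [angularPotential]
  rw [uIcc_of_le zero_le_one] at potential_cont
  have at_zero := (potential_cont 0 (left_mem_Icc.mpr zero_le_one)).tendsto
  rw [value_zero] at at_zero
  rw [← nhdsWithin_Ioc_eq_nhdsGT zero_lt_one]
  exact at_zero.mono_left (nhdsWithin_mono _ Ioc_subset_Icc_self)

end AngularPotential

section IntegrabilityOfSummands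

theorem integrableOn_Ioi_mul_self_of_le {g h : ℝ → ℝ} (hg : ContinuousOn g (Ioi 0))
    (hg_nonneg : ∀ r ∈ Ioi 0, 0 ≤ g r) (hle : ∀ r ∈ Ioi 0, g r ≤ h r)
    (hh : IntegrableOn (fun r ↦ h r * r) (Ioi 0)) : IntegrableOn (fun r ↦ g r * r) (Ioi 0) := by
  refine hh.mono' ((hg.mul continuousOn_id).aestronglyMeasurable measurableSet_Ioi) ?_
  filter_upwards [ae_restrict_mem measurableSet_Ioi] with r hr
  rw [Real.norm_of_nonneg (mul_nonneg (hg_nonneg r hr) (le_of_lt hr))]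
  exact mul_le_mul_of_nonneg_right (hle r hr) (le_of_lt hr)

variable {F : Type*} [NormedAddCommGroup F] [NormedSpace ℝ F] {f : ℝ → F}

theorem integrableOn_norm_deriv_sq_mul (hf : ContDiffOn ℝ 1 f (Ioi 0))
    (hint : IntegrableOn (fun r ↦ (‖deriv f r‖ ^ 2 + ‖f r‖ ^ 2 / r ^ 2 + ‖f r‖ ^ 4) * r) (Ioi 0)) :
    IntegrableOn (fun r ↦ ‖deriv f r‖ ^ 2 * r) (Ioi 0) := by
  have deriv_cont := hf.continuousOn_deriv_of_isOpen isOpen_Ioi le_rfl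
  refine integrableOn_Ioi_mul_self_of_le (deriv_cont.norm.pow 2) (fun _ _ ↦ sq_nonneg _)
    (fun r _ ↦ ?_) hint
  rw [add_assoc]
  exact le_add_of_nonneg_right (by positivity)

theorem integrableOn_norm_pow_four_mul (hf : ContinuousOn f (Ioi 0))
    (hint : IntegrableOn (fun r ↦ (‖deriv f r‖ ^ 2 + ‖f r‖ ^ 2 / r ^ 2 + ‖f r‖ ^ 4) * r) (Ioi 0)) :
    IntegrableOn (fun r ↦ ‖f r‖ ^ 4 * r) (Ioi 0) :=
  integrableOn_Ioi_mul_self_of_le (hf.norm.pow 4) (fun _ _ ↦ by positivity)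
    (fun _ _ ↦ le_add_of_nonneg_left (by positivity)) hint

end IntegrabilityOfSummands

theorem stmt4_general {F : Type*} [NormedAddCommGroup F] [InnerProductSpace ℝ F] (κ : ℝ)
    {f : ℝ → F} (hf : ContDiffOn ℝ 1 f (Ioi 0)) (hzero : Tendsto f (𝓝[>] 0) (𝓝 0))
    (hinf : Tendsto (fun r ↦ angularPotential κ f r * ‖f r‖ ^ 2) atTop (𝓝 0))
    (hderiv : IntegrableOn (fun r ↦ ‖deriv f r‖ ^ 2 * r) (Ioi 0))
    (hquartic : IntegrableOn (fun r ↦ ‖f r‖ ^ 4 * r) (Ioi 0)) :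
    2 * Real.pi * ∫ r in Ioi 0, energyDensity (angularPotential κ f) f r =
        (1 / 2) * (2 * Real.pi * ∫ r in Ioi 0, selfDualDensity (angularPotential κ f) f r) ∧
      0 ≤ 2 * Real.pi * ∫ r in Ioi 0, energyDensity (angularPotential κ f) f r := by
  have boundary_zero : Tendsto (fun r ↦ angularPotential κ f r * ‖f r‖ ^ 2) (𝓝[>] 0) (𝓝 0) := by
    simpa using
      (tendsto_angularPotential_nhdsGT_zero κ hf.continuousOn hquartic).mul (hzero.norm.pow 2)
  have selfDual_nonneg : 0 ≤ ∫ r in Ioi 0, selfDualDensity (angularPotential κ f) f r :=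
    setIntegral_nonneg measurableSet_Ioi fun _ hr ↦ selfDualDensity_nonneg (le_of_lt hr)
  rw [integral_energyDensity hf
    (fun _ hr ↦ hasDerivAt_angularPotential κ hf.continuousOn hquartic hr)
    boundary_zero hinf hderiv hquartic]
  exact ⟨by ring, by positivity⟩

/-- self-dual form of the energy `E[f] = (1/2)·2π ∫₀^∞ |D_f f|² r dr ≥ 0`. -/
theorem stmt4 (m : ℕ) (hm : 1 ≤ m) (f : ℝ → ℂ)
    (hf : ContDiffOn ℝ 1 f (Set.Ioi 0))
    (h0 : Tendsto f (nhdsWithin 0 (Set.Ioi 0)) (nhds 0))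
    (hinf : Tendsto (fun r => ((m : ℝ) + Atheta f r) * ‖f r‖ ^ 2) atTop (nhds 0))
    (hint : IntegrableOn
      (fun r => (‖deriv f r‖ ^ 2 + ‖f r‖ ^ 2 / r ^ 2 + ‖f r‖ ^ 4) * r) (Set.Ioi 0)) :
    Energy m f = (1 / 2) * (2 * Real.pi * ∫ r in Set.Ioi (0:ℝ),
      ‖deriv f r - ((((m : ℝ) + Atheta f r) / r : ℝ) : ℂ) * f r‖ ^ 2 * r) ∧
    0 ≤ Energy m f := by
  exact stmt4_general m hf h0 hinf (integrableOn_norm_deriv_sq_mul hf hint)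
    (integrableOn_norm_pow_four_mul hf.continuousOn hint)
end

section
/- Let m ≥ 1 be an integer, let I ⊆ (0,∞) be an open interval, and let u : I×(0,∞) → ℂ be smooth with r ↦ |u(t,r)|²·r integrable for each t ∈ I, satisfying the CSS equation at every point of I×(0,∞). Let J = {−1/s : s ∈ I} ⊆ (−∞,0) and define the pseudoconformal transform v(t,r) = (1/|t|)·u(−1/t, r/|t|)·e^{i·r²/(4t)} for (t,r) ∈ J×(0,∞). Then v satisfies the CSS equation at every point of J×(0,∞). -/
open MeasureTheory Set Filter

/-!
The CSS equation reads `(i ∂_t + ∂_r² + r⁻¹ ∂_r) u + V[u] u = 0`, where the real potential `V[u]`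
depends only on `|u|` and is homogeneous of degree two under the mass-preserving scaling
`|u| ↦ c |u(c ·)|`. Up to the unimodular factor `e^{i r²/(4t)}`, the pseudoconformal transform is
this scaling with `c = 1/|t|`, so `V` picks up the factor `c²`. The free operator picks up the same
factor: the terms created by differentiating the phase cancel those created by the `t`-dependence of
the scale. Hence the left-hand side of the equation is multiplied by `c³ e^{i r²/(4t)}`.
-/

open Function Topology

theorem hasDerivAt_uncurry_comp {𝕜 E : Type*} [NontriviallyNormedField 𝕜] [NormedAddCommGroup E]
    [NormedSpace 𝕜 E] {u : 𝕜 → 𝕜 → E} {x y : 𝕜 → 𝕜} {x' y' t : 𝕜}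
    (hu : DifferentiableAt 𝕜 (uncurry u) (x t, y t))
    (hx : HasDerivAt x x' t) (hy : HasDerivAt y y' t) :
    HasDerivAt (fun τ => u (x τ) (y τ))
      (x' • deriv (fun s => u s (y t)) (x t) + y' • deriv (u (x t)) (y t)) t := by
  set L := fderiv 𝕜 (uncurry u) (x t, y t)
  have hL : HasFDerivAt (uncurry u) L (x t, y t) := hu.hasFDerivAt
  have h_fst : HasDerivAt (fun s => u s (y t)) (L (1, 0)) (x t) :=
    HasFDerivAt.comp_hasDerivAt (l := uncurry u) (x t) hL
      ((hasDerivAt_id' (x t)).prodMk (hasDerivAt_const (x t) (y t)))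
  have h_snd : HasDerivAt (u (x t)) (L (0, 1)) (y t) :=
    HasFDerivAt.comp_hasDerivAt (l := uncurry u) (y t) hL
      ((hasDerivAt_const (y t) (x t)).prodMk (hasDerivAt_id' (y t)))
  have h_split : L (x', y') = x' • L (1, 0) + y' • L (0, 1) := by
    rw [← map_smul, ← map_smul, ← map_add]
    simp
  rw [h_fst.deriv, h_snd.deriv, ← h_split]
  exact hL.comp_hasDerivAt t (hx.prodMk hy)

theorem hasDerivAt_inv_abs {t : ℝ} (ht : t ≠ 0) :
    HasDerivAt (fun τ : ℝ => |τ|⁻¹) (-(|t|⁻¹ / t)) t := by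
  refine ((hasDerivAt_abs ht).inv (abs_ne_zero.mpr ht)).congr_deriv ?_
  rcases ht.lt_or_gt with h | h
  · simp only [sign_neg h, abs_of_neg h, SignType.coe_neg_one]
    field
  · simp only [sign_pos h, abs_of_pos h, SignType.coe_one]
    field

/-- The unimodular factor `e^{i r² / (4t)}` of the pseudoconformal transform; at `t = 0` division by
zero makes it `1`. -/
noncomputable def quadraticPhase (t r : ℝ) : ℂ :=
  Complex.exp (Complex.I * (r : ℂ) ^ 2 / (4 * (t : ℂ)))

theorem norm_quadraticPhase (t r : ℝ) : ‖quadraticPhase t r‖ = 1 := by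
  have h : Complex.I * (r : ℂ) ^ 2 / (4 * (t : ℂ)) = ((r ^ 2 / (4 * t) : ℝ) : ℂ) * Complex.I := by
    push_cast
    ring
  rw [quadraticPhase, h, Complex.norm_exp_ofReal_mul_I]

theorem hasDerivAt_quadraticPhase (t r : ℝ) :
    HasDerivAt (quadraticPhase t) (Complex.I * r / (2 * t) * quadraticPhase t r) r := by
  have h := ((((hasDerivAt_id r).ofReal_comp.pow 2).const_mul Complex.I).div_const
    (4 * (t : ℂ))).cexp
  refine h.congr_deriv ?_
  simp only [quadraticPhase, id, Pi.pow_apply]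
  push_cast
  ring

theorem hasDerivAt_quadraticPhase_time {t : ℝ} (ht : t ≠ 0) (r : ℝ) :
    HasDerivAt (fun τ => quadraticPhase τ r)
      (-(Complex.I * r ^ 2 / (4 * t ^ 2)) * quadraticPhase t r) t := by
  have htc : (t : ℂ) ≠ 0 := Complex.ofReal_ne_zero.mpr ht
  have h := ((((hasDerivAt_id t).ofReal_comp.const_mul (4 : ℂ)).fun_inv
    (mul_ne_zero (by norm_num) htc)).const_mul (Complex.I * (r : ℂ) ^ 2)).cexp
  refine h.congr_deriv ?_
  simp only [quadraticPhase, id, ← div_eq_mul_inv]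
  push_cast
  field

theorem hasDerivAt_mul_quadraticPhase {f : ℝ → ℂ} {f' : ℂ} {r : ℝ} (t : ℝ)
    (hf : HasDerivAt f f' r) :
    HasDerivAt (fun x => f x * quadraticPhase t x)
      ((f' + Complex.I * r / (2 * t) * f r) * quadraticPhase t r) r :=
  (hf.mul (hasDerivAt_quadraticPhase t r)).congr_deriv (by ring)

theorem deriv_deriv_mul_quadraticPhase {f : ℝ → ℂ} {r : ℝ} (t : ℝ) (hf : ContDiffAt ℝ 2 f r) :
    deriv (deriv fun x => f x * quadraticPhase t x) r =
      (deriv (deriv f) r + Complex.I * r / t * deriv f r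
        + (Complex.I / (2 * t) - r ^ 2 / (4 * t ^ 2)) * f r) * quadraticPhase t r := by
  have hf_near : ∀ᶠ x in 𝓝 r, DifferentiableAt ℝ f x :=
    (hf.eventually (by simp)).mono fun x hx => hx.differentiableAt (by simp)
  have h_deriv : deriv (fun x => f x * quadraticPhase t x) =ᶠ[𝓝 r] fun x =>
      (deriv f x + Complex.I * x / (2 * t) * f x) * quadraticPhase t x :=
    hf_near.mono fun x hx => (hasDerivAt_mul_quadraticPhase t hx.hasDerivAt).deriv
  have hf'' : HasDerivAt (deriv f) (deriv (deriv f) r) r :=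
    ((hf.derivWithin (m := 1) (by norm_num)).differentiableAt (by simp)).hasDerivAt
  have h_coeff : HasDerivAt (fun x : ℝ => Complex.I * x / (2 * t)) (Complex.I / (2 * t)) r := by
    simpa using ((hasDerivAt_id r).ofReal_comp.const_mul Complex.I).div_const (2 * (t : ℂ))
  rw [h_deriv.deriv_eq, (hasDerivAt_mul_quadraticPhase t
    (hf''.fun_add (h_coeff.fun_mul hf_near.self_of_nhds.hasDerivAt))).deriv]
  linear_combination (r ^ 2 / (4 * t ^ 2) * f r * quadraticPhase t r : ℂ) * Complex.I_sq

theorem atheta_eq_of_norm_eq {f g : ℝ → ℂ} {c r : ℝ} (hr : 0 ≤ r)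
    (h : ∀ s, 0 < s → ‖g s‖ = c * ‖f (c * s)‖) : Atheta g r = Atheta f (c * r) := by
  have h_subst := intervalIntegral.mul_integral_comp_mul_left (a := 0) (b := r)
    (f := fun s => ‖f s‖ ^ 2 * s) c
  rw [mul_zero] at h_subst
  rw [Atheta, Atheta, ← h_subst, ← intervalIntegral.integral_const_mul c]
  congr 1
  refine intervalIntegral.integral_congr_Ioo_of_le hr fun s hs => ?_
  simp only [h s hs.1]
  ring

theorem at_eq_of_norm_eq (m : ℕ) {f g : ℝ → ℂ} {c r : ℝ} (hc : 0 < c) (hr : 0 ≤ r)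
    (h : ∀ s, 0 < s → ‖g s‖ = c * ‖f (c * s)‖) : At m g r = c ^ 2 * At m f (c * r) := by
  rw [At, At, ← integral_comp_mul_left_Ioi' _ r hc, smul_eq_mul, mul_neg, ← mul_assoc,
    ← integral_const_mul, setIntegral_congr_fun measurableSet_Ioi]
  intro s hs
  have hs0 : 0 < s := hr.trans_lt hs
  simp only [atheta_eq_of_norm_eq hs0.le h, h s hs0]
  field

/-- The real potential `V[f] = |f|² - A_t[f] - ((m + A_θ[f]) / r)²`, which collects all terms of the
CSS equation other than the free radial Schrödinger operator. -/
noncomputable def cssPotential (m : ℕ) (f : ℝ → ℂ) (r : ℝ) : ℝ :=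
  ‖f r‖ ^ 2 - At m f r - ((m + Atheta f r) / r) ^ 2

theorem cssPotential_eq_of_norm_eq (m : ℕ) {f g : ℝ → ℂ} {c r : ℝ} (hc : 0 < c) (hr : 0 < r)
    (h : ∀ s, 0 < s → ‖g s‖ = c * ‖f (c * s)‖) :
    cssPotential m g r = c ^ 2 * cssPotential m f (c * r) := by
  rw [cssPotential, cssPotential, atheta_eq_of_norm_eq hr.le h, at_eq_of_norm_eq m hc hr.le h,
    h r hr]
  field

theorem cssPotential_congr (m : ℕ) {f g : ℝ → ℂ} {r : ℝ} (hr : 0 < r) (h : EqOn f g (Ioi 0)) :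
    cssPotential m f r = cssPotential m g r := by
  simpa using cssPotential_eq_of_norm_eq m one_pos hr fun s hs => by simp [h hs]

/-- The free radial Schrödinger operator `(i ∂_t + ∂_r² + r⁻¹ ∂_r) u` at `(t, r)`. -/
noncomputable def radialSchrodinger (u : ℝ → ℝ → ℂ) (t r : ℝ) : ℂ :=
  Complex.I * deriv (fun s => u s r) t + deriv (deriv (u t)) r + 1 / (r : ℂ) * deriv (u t) r

theorem radialSchrodinger_congr {u v : ℝ → ℝ → ℂ} {t r : ℝ} (hr : 0 < r)
    (h : ∀ᶠ s in 𝓝 t, EqOn (u s) (v s) (Ioi 0)) :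
    radialSchrodinger u t r = radialSchrodinger v t r := by
  have h_time : (fun s => u s r) =ᶠ[𝓝 t] fun s => v s r := h.mono fun s hs => hs hr
  have h_space : u t =ᶠ[𝓝 r] v t := h.self_of_nhds.eventuallyEq_of_mem (Ioi_mem_nhds hr)
  rw [radialSchrodinger, radialSchrodinger, h_time.deriv_eq, h_space.deriv_eq,
    h_space.deriv.deriv_eq]

theorem cssEq_iff {m : ℕ} {u : ℝ → ℝ → ℂ} {t r : ℝ} :
    CSSeq m u t r ↔ radialSchrodinger u t r + cssPotential m (u t) r * u t r = 0 := by
  rw [CSSeq, radialSchrodinger, cssPotential]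
  push_cast
  ring_nf

theorem cssEq_congr {m : ℕ} {u v : ℝ → ℝ → ℂ} {t r : ℝ} (hr : 0 < r)
    (h : ∀ᶠ s in 𝓝 t, EqOn (u s) (v s) (Ioi 0)) : CSSeq m u t r ↔ CSSeq m v t r := by
  rw [cssEq_iff, cssEq_iff, radialSchrodinger_congr hr h, cssPotential_congr m hr h.self_of_nhds,
    h.self_of_nhds hr]

/-- The pseudoconformal transform `(1/|t|) u(-1/t, r/|t|) e^{i r² / (4t)}`, for times of either
sign; at `t = 0` division by zero makes it `0`. -/
noncomputable def pseudoconformal (u : ℝ → ℝ → ℂ) (t r : ℝ) : ℂ :=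
  ((1 / |t| : ℝ) : ℂ) * u (-1 / t) (r / |t|) * quadraticPhase t r

section Pseudoconformal

variable {u : ℝ → ℝ → ℂ} {t r : ℝ}

theorem pseudoconformal_eq (u : ℝ → ℝ → ℂ) (t r : ℝ) :
    pseudoconformal u t r =
      ((|t|⁻¹ : ℝ) : ℂ) * u (-1 / t) (|t|⁻¹ * r) * quadraticPhase t r := by
  rw [pseudoconformal, one_div, div_eq_inv_mul r]

theorem norm_pseudoconformal (u : ℝ → ℝ → ℂ) (t r : ℝ) :
    ‖pseudoconformal u t r‖ = |t|⁻¹ * ‖u (-1 / t) (|t|⁻¹ * r)‖ := by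
  simp [pseudoconformal_eq, norm_quadraticPhase]

theorem deriv_pseudoconformal_time (ht : t ≠ 0)
    (hu : DifferentiableAt ℝ (uncurry u) (-1 / t, |t|⁻¹ * r)) :
    deriv (fun τ => pseudoconformal u τ r) t =
      ((|t|⁻¹ : ℝ) : ℂ) * (1 / t ^ 2 * deriv (fun s => u s (|t|⁻¹ * r)) (-1 / t)
        - (|t|⁻¹ : ℝ) * r / t * deriv (u (-1 / t)) (|t|⁻¹ * r)
        - (1 / t + Complex.I * r ^ 2 / (4 * t ^ 2)) * u (-1 / t) (|t|⁻¹ * r))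
        * quadraticPhase t r := by
  have h_scale := hasDerivAt_inv_abs ht
  have h_time : HasDerivAt (fun τ : ℝ => -1 / τ) (1 / t ^ 2) t := by
    simpa [div_eq_mul_inv] using (hasDerivAt_inv ht).const_mul (-1)
  have h_profile := hasDerivAt_uncurry_comp hu h_time (h_scale.mul_const r)
  simp only [pseudoconformal_eq]
  rw [((h_scale.ofReal_comp.fun_mul h_profile).fun_mul (hasDerivAt_quadraticPhase_time ht r)).deriv]
  simp only [Complex.real_smul]
  push_cast
  ring

theorem deriv_pseudoconformal (hu : DifferentiableAt ℝ (u (-1 / t)) (|t|⁻¹ * r)) :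
    deriv (pseudoconformal u t) r =
      ((|t|⁻¹ : ℝ) : ℂ) * ((|t|⁻¹ : ℝ) * deriv (u (-1 / t)) (|t|⁻¹ * r)
        + Complex.I * r / (2 * t) * u (-1 / t) (|t|⁻¹ * r)) * quadraticPhase t r := by
  have h_profile := (hu.hasDerivAt.scomp r
    ((hasDerivAt_id r).const_mul |t|⁻¹)).const_mul ((|t|⁻¹ : ℝ) : ℂ)
  rw [funext (pseudoconformal_eq u t)]
  refine (hasDerivAt_mul_quadraticPhase t h_profile).deriv.trans ?_
  simp only [comp_apply, mul_one, Complex.real_smul]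
  ring

theorem deriv_deriv_pseudoconformal (hu : ContDiffAt ℝ 2 (u (-1 / t)) (|t|⁻¹ * r)) :
    deriv (deriv (pseudoconformal u t)) r =
      ((|t|⁻¹ : ℝ) : ℂ) * ((|t|⁻¹ : ℝ) ^ 2 * deriv (deriv (u (-1 / t))) (|t|⁻¹ * r)
        + Complex.I * r / t * ((|t|⁻¹ : ℝ) * deriv (u (-1 / t)) (|t|⁻¹ * r))
        + (Complex.I / (2 * t) - r ^ 2 / (4 * t ^ 2)) * u (-1 / t) (|t|⁻¹ * r))
        * quadraticPhase t r := by
  have h_profile : ContDiffAt ℝ 2 (fun x => ((|t|⁻¹ : ℝ) : ℂ) * u (-1 / t) (|t|⁻¹ * x)) r :=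
    contDiffAt_const.mul (hu.comp r (contDiffAt_const.mul contDiffAt_id))
  rw [funext (pseudoconformal_eq u t), deriv_deriv_mul_quadraticPhase t h_profile]
  simp only [deriv_const_mul_field', deriv_comp_mul_left, Complex.real_smul]
  ring

theorem radialSchrodinger_pseudoconformal (ht : t ≠ 0) (hr : r ≠ 0)
    (hu : ContDiffAt ℝ 2 (uncurry u) (-1 / t, |t|⁻¹ * r)) :
    radialSchrodinger (pseudoconformal u) t r =
      ((|t|⁻¹ : ℝ) : ℂ) ^ 3 * quadraticPhase t r
        * radialSchrodinger u (-1 / t) (|t|⁻¹ * r) := by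
  have hu_space : ContDiffAt ℝ 2 (u (-1 / t)) (|t|⁻¹ * r) :=
    hu.comp (|t|⁻¹ * r) (contDiffAt_const.prodMk contDiffAt_id)
  rw [radialSchrodinger, radialSchrodinger,
    deriv_pseudoconformal_time ht (hu.differentiableAt (by simp)),
    deriv_deriv_pseudoconformal hu_space,
    deriv_pseudoconformal (hu_space.differentiableAt (by simp))]
  have h_scale_sq : (1 / t ^ 2 : ℂ) = ((|t|⁻¹ : ℝ) : ℂ) ^ 2 := by
    norm_cast
    rw [inv_pow, sq_abs, one_div]
  have h_scale : ((|t|⁻¹ : ℝ) : ℂ) ≠ 0 :=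
    Complex.ofReal_ne_zero.mpr (inv_ne_zero (abs_ne_zero.mpr ht))
  have hrc : (r : ℂ) ≠ 0 := Complex.ofReal_ne_zero.mpr hr
  rw [h_scale_sq, Complex.ofReal_mul]
  set c : ℂ := ((|t|⁻¹ : ℝ) : ℂ)
  have h_phase_term : 1 / (r : ℂ) * (Complex.I * r / (2 * t)) = Complex.I / (2 * t) := by field
  have h_radial_term : c ^ 3 * (1 / (c * r)) = c ^ 2 * (1 / r) := by field
  linear_combination
    c * u (-1 / t) (|t|⁻¹ * r) * quadraticPhase t r * h_phase_term
    - quadraticPhase t r * deriv (u (-1 / t)) (|t|⁻¹ * r) * h_radial_term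
    - c * (r ^ 2 / (4 * t ^ 2)) * u (-1 / t) (|t|⁻¹ * r) * quadraticPhase t r * Complex.I_sq

theorem cssPotential_pseudoconformal (m : ℕ) (u : ℝ → ℝ → ℂ) (ht : t ≠ 0) (hr : 0 < r) :
    cssPotential m (pseudoconformal u t) r =
      |t|⁻¹ ^ 2 * cssPotential m (u (-1 / t)) (|t|⁻¹ * r) :=
  cssPotential_eq_of_norm_eq m (inv_pos.mpr (abs_pos.mpr ht)) hr
    fun s _ => norm_pseudoconformal u t s

theorem cssEq_pseudoconformal_iff {m : ℕ} (ht : t ≠ 0) (hr : 0 < r)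
    (hu : ContDiffAt ℝ 2 (uncurry u) (-1 / t, |t|⁻¹ * r)) :
    CSSeq m (pseudoconformal u) t r ↔ CSSeq m u (-1 / t) (|t|⁻¹ * r) := by
  have h_factor : ((|t|⁻¹ : ℝ) : ℂ) ^ 3 * quadraticPhase t r ≠ 0 :=
    mul_ne_zero (pow_ne_zero 3 (by simpa using ht)) (Complex.exp_ne_zero _)
  have h_eq : radialSchrodinger (pseudoconformal u) t r
      + cssPotential m (pseudoconformal u t) r * pseudoconformal u t r =
      ((|t|⁻¹ : ℝ) : ℂ) ^ 3 * quadraticPhase t r *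
        (radialSchrodinger u (-1 / t) (|t|⁻¹ * r)
          + cssPotential m (u (-1 / t)) (|t|⁻¹ * r) * u (-1 / t) (|t|⁻¹ * r)) := by
    rw [radialSchrodinger_pseudoconformal ht hr.ne' hu, cssPotential_pseudoconformal m u ht hr,
      pseudoconformal_eq]
    push_cast
    ring
  rw [cssEq_iff, cssEq_iff, h_eq, mul_eq_zero_iff_left h_factor]

end Pseudoconformal

theorem stmt6_general (m : ℕ) {I : Set ℝ} (hI : IsOpen I) (hI0 : 0 ∉ I) {u v : ℝ → ℝ → ℂ}
    (hu : ContDiffOn ℝ 2 (uncurry u) (I ×ˢ Ioi 0))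
    (hint : ∀ t ∈ I, IntegrableOn (fun r => ‖u t r‖ ^ 2 * r) (Ioi 0))
    (hCSS : ∀ t ∈ I, ∀ r, 0 < r → CSSeq m u t r)
    (hv : ∀ t ∈ (fun s : ℝ => -1 / s) '' I, EqOn (v t) (pseudoconformal u t) (Ioi 0)) :
    ∀ t ∈ (fun s : ℝ => -1 / s) '' I, ∀ r, 0 < r → CSSeq m v t r := by
  have h_invol (s : ℝ) : -1 / (-1 / s) = s := by simp [neg_div]
  rintro t ⟨s, hs, rfl⟩ r hr
  have ht : -1 / s ≠ 0 := div_ne_zero (by simp) (ne_of_mem_of_not_mem hs hI0)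
  have hs' : -1 / (-1 / s) ∈ I := (h_invol s).symm ▸ hs
  have hρ : 0 < |-1 / s|⁻¹ * r := by positivity
  have h_near : ∀ᶠ τ in 𝓝 (-1 / s), EqOn (v τ) (pseudoconformal u τ) (Ioi 0) := by
    filter_upwards [(continuousAt_const.div continuousAt_id ht).eventually (hI.mem_nhds hs')]
      with τ hτ using hv τ ⟨-1 / τ, hτ, h_invol τ⟩
  have hu_at := hu.contDiffAt ((hI.prod isOpen_Ioi).mem_nhds (mk_mem_prod hs' hρ))
  exact (cssEq_congr hr h_near).mpr
    ((cssEq_pseudoconformal_iff ht hr hu_at).mpr (hCSS _ hs' _ hρ))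

/-- the pseudoconformal transform of a solution of CSS is again a solution. -/
theorem stmt6 (m : ℕ) (hm : 1 ≤ m) (I : Set ℝ) (hI : I ⊆ Set.Ioi 0)
    (hIint : ∃ a b : ℝ, I = Set.Ioo a b)
    (u : ℝ → ℝ → ℂ)
    (hsmooth : ContDiffOn ℝ (⊤ : ℕ∞) (fun p : ℝ × ℝ => u p.1 p.2) (I ×ˢ Set.Ioi (0:ℝ)))
    (hint : ∀ t ∈ I, IntegrableOn (fun r => ‖u t r‖ ^ 2 * r) (Set.Ioi (0:ℝ)))
    (hCSS : ∀ t ∈ I, ∀ r : ℝ, 0 < r → CSSeq m u t r)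
    (v : ℝ → ℝ → ℂ)
    (hv : ∀ t ∈ (fun s : ℝ => -1 / s) '' I, ∀ r : ℝ,
      v t r = ((1 / |t| : ℝ) : ℂ) * u (-1 / t) (r / |t|) *
        Complex.exp (Complex.I * (r : ℂ) ^ 2 / (4 * (t : ℂ)))) :
    ∀ t ∈ (fun s : ℝ => -1 / s) '' I, ∀ r : ℝ, 0 < r → CSSeq m v t r := by
  obtain ⟨a, b, rfl⟩ := hIint
  exact stmt6_general m isOpen_Ioo (fun h => lt_irrefl (0 : ℝ) (hI h))
    (hsmooth.of_le (by norm_cast)) hint hCSS fun t ht r _ => hv t ht r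
end
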